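/- arXiv:math/0605154 — 2 statements merged into one kernel-verified Lean document; each statement's English description precedes it below -/
import Mathlib

section
/- Let G be a finite simple graph with an odd number 2n+1 of vertices and edge weights in a commutative ring, and let a_1, b_1, a_2, b_2 be distinct vertices such that G is noncrossing with respect to the cyclic sequence (a_1, b_1, a_2, b_2). Then M(G−{a_1})·M(G−{a_2,b_1,b_2}) + M(G−{a_2})·M(G−{a_1,b_1,b_2}) = M(G−{b_1})·M(G−{a_1,a_2,b_2}) + M(G−{b_2})·M(G−{a_1,a_2,b_1}). -/
/-- A perfect matching of the induced subgraph of `G` on the vertex set `s`,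
represented as a set `m` of edges of `G`: every edge of `m` is an edge of `G`
with both endpoints in `s`, and every vertex of `s` lies in exactly one edge of `m`. -/
def IsPMOn {α : Type*} (G : SimpleGraph α) (s : Finset α) (m : Finset (Sym2 α)) : Prop :=
  (∀ e ∈ m, e ∈ G.edgeSet ∧ ∀ v ∈ e, v ∈ s) ∧ ∀ v ∈ s, ∃! e, e ∈ m ∧ v ∈ e

/-- The number of perfect matchings of the induced subgraph of `G` on `s`. -/
noncomputable def pmCount {α : Type*} (G : SimpleGraph α) (s : Finset α) : ℕ :=
  Nat.card {m : Finset (Sym2 α) // IsPMOn G s m}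

open Classical in
/-- The sum, over all perfect matchings of the induced subgraph of `G` on `s`,
of the product of the weights of the edges of the matching. -/
noncomputable def pmSum {α R : Type*} [Fintype α] [DecidableEq α] [CommRing R]
    (G : SimpleGraph α) (w : Sym2 α → R) (s : Finset α) : R :=
  ∑ m ∈ Finset.univ.filter (fun m : Finset (Sym2 α) => IsPMOn G s m), ∏ e ∈ m, w e

/-- There are two vertex-disjoint paths in `G`, one joining `x₁` to `y₁` and one joining
`x₂` to `y₂`, whose internal vertices avoid `S`. -/
def DisjointPaths {α : Type*} (G : SimpleGraph α) (S : Set α) (x₁ y₁ x₂ y₂ : α) : Prop :=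
  ∃ (p : G.Walk x₁ y₁) (q : G.Walk x₂ y₂), p.IsPath ∧ q.IsPath ∧
    (∀ u ∈ p.support, u ∉ q.support) ∧
    (∀ u ∈ p.support, u ≠ x₁ → u ≠ y₁ → u ∉ S) ∧
    (∀ u ∈ q.support, u ≠ x₂ → u ≠ y₂ → u ∉ S)

/-- `G` is noncrossing with respect to the cyclic sequence given by the list `L`:
there are no indices `i < j < k < l` such that `G` contains two vertex-disjoint paths,
one joining `L[i]` to `L[k]` and one joining `L[j]` to `L[l]`, whose internal vertices
avoid the vertices of `L`. -/
def NoncrossingList {α : Type*} (G : SimpleGraph α) (L : List α) : Prop :=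
  ∀ i j k l : Fin L.length, i < j → j < k → k < l →
    ¬ DisjointPaths G {x | x ∈ L} (L.get i) (L.get k) (L.get j) (L.get l)

/-- `U, W` form a bipartition of the vertices of `G`. -/
def IsBipartition {α : Type*} [Fintype α] [DecidableEq α]
    (G : SimpleGraph α) (U W : Finset α) : Prop :=
  Disjoint U W ∧ U ∪ W = Finset.univ ∧
    ∀ ⦃x y⦄, G.Adj x y → ((x ∈ U ∧ y ∈ W) ∨ (x ∈ W ∧ y ∈ U))

/-- `P` is an `MH`-alternating path, where `MH` is the unique perfect matching of the
induced subgraph of `G` on the vertex set `sH`: `P` is a (nontrivial) path, among any two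
consecutive edges of `P` exactly one lies in `MH`, and for each endpoint the incident edge
of `P` lies in `MH` iff the endpoint belongs to `sH`. -/
def IsAltPath {α : Type*} (G : SimpleGraph α) (sH : Finset α) (MH : Finset (Sym2 α))
    {x y : α} (P : G.Walk x y) : Prop :=
  P.IsPath ∧ P.edges ≠ [] ∧
  P.edges.Chain' (fun e f => e ∈ MH ↔ f ∉ MH) ∧
  (∀ e ∈ P.edges.head?, (e ∈ MH ↔ x ∈ sH)) ∧
  (∀ e ∈ P.edges.getLast?, (e ∈ MH ↔ y ∈ sH))

/-- A family of pairwise vertex-disjoint `MH`-alternating paths in `G` whose set of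
path-endpoints is exactly `A`, each vertex of `A` being an endpoint of exactly one
path of the family. -/
def IsAltPathNest {α : Type*} (G : SimpleGraph α) (sH : Finset α) (MH : Finset (Sym2 α))
    (A : Finset α) (F : Finset (Σ x : α, Σ y : α, G.Walk x y)) : Prop :=
  (∀ p ∈ F, IsAltPath G sH MH p.2.2) ∧
  (∀ p ∈ F, ∀ q ∈ F, p ≠ q → ∀ u ∈ p.2.2.support, u ∉ q.2.2.support) ∧
  (∀ p ∈ F, p.1 ∈ A ∧ p.2.1 ∈ A) ∧
  (∀ v ∈ A, ∃! p, p ∈ F ∧ (v = p.1 ∨ v = p.2.1))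

/-- A 1-factor on `{1, …, n}`: a partition of `Fin n` into pairs, each pair recorded
as an ordered pair `(i, j)` with `i < j`. -/
def IsOneFactor (n : ℕ) (F : Finset (Fin n × Fin n)) : Prop :=
  (∀ p ∈ F, p.1 < p.2) ∧ ∀ v : Fin n, ∃! p, p ∈ F ∧ (v = p.1 ∨ v = p.2)

/-- The crossing number of a 1-factor: the number of pairs of pairs
`(i,j), (k,l)` in `F` with `i < k < j < l`. -/
def crossingNumber (n : ℕ) (F : Finset (Fin n × Fin n)) : ℕ :=
  ((F ×ˢ F).filter (fun q => q.1.1 < q.2.1 ∧ q.2.1 < q.1.2 ∧ q.1.2 < q.2.2)).card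

/-!
Superpose a perfect matching `m₁` of `G[s₁]` and a perfect matching `m₂` of `G[s₂]`. The terminals,
that is the vertices of `s₁ ∆ s₂`, are the ends of the alternating paths of the superposition, so
every component contains either none of them or exactly two. Exchanging the two matchings on the
component that links the terminals `x` and `y` preserves the product of the weights and replaces
`s₁, s₂` by `s₁ ∆ {x, y}, s₂ ∆ {x, y}`.

Expand `M(G - x) M(G - (T \ x))` according to the terminal `y` linked to `x`, and call the parts
`L(x, y)`; by the exchange `L(x, y) = L(y, x)`. For `T = {a₁, b₁, a₂, b₂}`, linking `a₁` to `a₂`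
would link `b₁` to `b₂` by a disjoint path, so in the noncrossing case only the `L(aᵢ, bⱼ)` remain,
and both sides of the identity are their sum.
-/

section Condensation

open Finset
open scoped symmDiff

variable {α R : Type*}

/-! ### Perfect matchings and closed vertex sets -/

lemma IsPMOn.union [DecidableEq α] {G : SimpleGraph α} {s t : Finset α} {m n : Finset (Sym2 α)}
    (hm : IsPMOn G s m) (hn : IsPMOn G t n) (hst : Disjoint s t) : IsPMOn G (s ∪ t) (m ∪ n) := by
  rw [Finset.disjoint_left] at hst
  refine ⟨fun e he => ?_, fun v hv => ?_⟩
  · rcases mem_union.1 he with he | he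
    · exact ⟨(hm.1 e he).1, fun v hv => mem_union_left _ ((hm.1 e he).2 v hv)⟩
    · exact ⟨(hn.1 e he).1, fun v hv => mem_union_right _ ((hn.1 e he).2 v hv)⟩
  · rcases mem_union.1 hv with hvs | hvt
    · obtain ⟨e, ⟨he, hve⟩, huniq⟩ := hm.2 v hvs
      refine ⟨e, ⟨mem_union_left _ he, hve⟩, fun f ⟨hf, hvf⟩ => huniq f ⟨?_, hvf⟩⟩
      exact (mem_union.1 hf).resolve_right fun hf => hst hvs ((hn.1 f hf).2 v hvf)
    · obtain ⟨e, ⟨he, hve⟩, huniq⟩ := hn.2 v hvt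
      refine ⟨e, ⟨mem_union_right _ he, hve⟩, fun f ⟨hf, hvf⟩ => huniq f ⟨?_, hvf⟩⟩
      exact (mem_union.1 hf).resolve_left fun hf => hst ((hm.1 f hf).2 v hvf) hvt

lemma IsPMOn.card_eq_two_mul_card {G : SimpleGraph α} {s : Finset α} {m : Finset (Sym2 α)}
    (hm : IsPMOn G s m) : #s = 2 * #m := by
  classical
  have hs : s = m.biUnion Sym2.toFinset := by
    ext v
    simp only [mem_biUnion, Sym2.mem_toFinset]
    exact ⟨fun hv => (hm.2 v hv).exists, fun ⟨e, he, hve⟩ => (hm.1 e he).2 v hve⟩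
  have hdisj : (m : Set (Sym2 α)).PairwiseDisjoint Sym2.toFinset := by
    intro e he f hf hef
    refine Finset.disjoint_left.2 fun v hve hvf => hef ?_
    rw [Sym2.mem_toFinset] at hve hvf
    exact (hm.2 v ((hm.1 e he).2 v hve)).unique ⟨he, hve⟩ ⟨hf, hvf⟩
  rw [hs, card_biUnion hdisj, sum_const_nat fun e he => ?_, mul_comm]
  exact Sym2.card_toFinset_of_not_isDiag e (G.not_isDiag_of_mem_edgeSet (hm.1 e he).1)

open Classical in
/-- The edges of `m` with at least one endpoint in `C`. -/
noncomputable def edgesMeeting (C : Finset α) (m : Finset (Sym2 α)) : Finset (Sym2 α) :=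
  {e ∈ m | ∃ v ∈ e, v ∈ C}

lemma mem_edgesMeeting {C : Finset α} {m : Finset (Sym2 α)} {e : Sym2 α} :
    e ∈ edgesMeeting C m ↔ e ∈ m ∧ ∃ v ∈ e, v ∈ C := by
  simp only [edgesMeeting, mem_filter]

/-- The vertex set `C` is closed under the edges of `m`: no edge of `m` leaves `C`. -/
def EdgeClosed (C : Finset α) (m : Finset (Sym2 α)) : Prop :=
  ∀ e ∈ m, ∀ u ∈ e, ∀ v ∈ e, u ∈ C → v ∈ C

lemma IsPMOn.inter_of_edgeClosed [DecidableEq α] {G : SimpleGraph α} {s C : Finset α}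
    {m : Finset (Sym2 α)} (hm : IsPMOn G s m) (hC : EdgeClosed C m) :
    IsPMOn G (s ∩ C) (edgesMeeting C m) := by
  refine ⟨fun e he => ?_, fun v hv => ?_⟩
  · obtain ⟨he, u, hue, huC⟩ := mem_edgesMeeting.1 he
    exact ⟨(hm.1 e he).1, fun v hv => mem_inter.2 ⟨(hm.1 e he).2 v hv, hC e he u hue v hv huC⟩⟩
  · obtain ⟨hvs, hvC⟩ := mem_inter.1 hv
    obtain ⟨e, ⟨he, hve⟩, huniq⟩ := hm.2 v hvs
    exact ⟨e, ⟨mem_edgesMeeting.2 ⟨he, v, hve, hvC⟩, hve⟩,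
      fun f ⟨hf, hvf⟩ => huniq f ⟨(mem_edgesMeeting.1 hf).1, hvf⟩⟩

lemma IsPMOn.sdiff_of_edgeClosed [DecidableEq α] {G : SimpleGraph α} {s C : Finset α}
    {m : Finset (Sym2 α)} (hm : IsPMOn G s m) (hC : EdgeClosed C m) :
    IsPMOn G (s \ C) (m \ edgesMeeting C m) := by
  refine ⟨fun e he => ?_, fun v hv => ?_⟩
  · obtain ⟨he, hemeet⟩ := mem_sdiff.1 he
    exact ⟨(hm.1 e he).1, fun v hv => mem_sdiff.2
      ⟨(hm.1 e he).2 v hv, fun hvC => hemeet (mem_edgesMeeting.2 ⟨he, v, hv, hvC⟩)⟩⟩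
  · obtain ⟨hvs, hvC⟩ := mem_sdiff.1 hv
    obtain ⟨e, ⟨he, hve⟩, huniq⟩ := hm.2 v hvs
    refine ⟨e, ⟨mem_sdiff.2 ⟨he, fun hemeet => ?_⟩, hve⟩,
      fun f ⟨hf, hvf⟩ => huniq f ⟨(mem_sdiff.1 hf).1, hvf⟩⟩
    obtain ⟨-, u, hue, huC⟩ := mem_edgesMeeting.1 hemeet
    exact hvC (hC e he u hue v hve huC)

/-- The edge set obtained from `m₁` by replacing its edges that meet `C` by those of `m₂`. -/
noncomputable def exchange [DecidableEq α] (C : Finset α) (m₁ m₂ : Finset (Sym2 α)) :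
    Finset (Sym2 α) :=
  (m₁ \ edgesMeeting C m₁) ∪ edgesMeeting C m₂

lemma mem_exchange [DecidableEq α] {C : Finset α} {m₁ m₂ : Finset (Sym2 α)} {e : Sym2 α} :
    e ∈ exchange C m₁ m₂ ↔ (e ∈ m₁ ∧ ¬∃ v ∈ e, v ∈ C) ∨ (e ∈ m₂ ∧ ∃ v ∈ e, v ∈ C) := by
  by_cases hmeet : ∃ v ∈ e, v ∈ C <;>
    simp only [exchange, mem_union, mem_sdiff, mem_edgesMeeting, hmeet] <;> tauto

lemma exchange_exchange [DecidableEq α] (C : Finset α) (m₁ m₂ : Finset (Sym2 α)) :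
    exchange C (exchange C m₁ m₂) (exchange C m₂ m₁) = m₁ := by
  ext e
  by_cases hmeet : ∃ v ∈ e, v ∈ C <;> simp only [mem_exchange, hmeet] <;> tauto

lemma prod_exchange_mul_prod_exchange [DecidableEq α] [CommMonoid R] (w : Sym2 α → R)
    (C : Finset α) (m₁ m₂ : Finset (Sym2 α)) :
    (∏ e ∈ exchange C m₁ m₂, w e) * ∏ e ∈ exchange C m₂ m₁, w e =
      (∏ e ∈ m₁, w e) * ∏ e ∈ m₂, w e := by
  have hsub (m : Finset (Sym2 α)) : edgesMeeting C m ⊆ m := fun e he => (mem_edgesMeeting.1 he).1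
  have hdisj (m n : Finset (Sym2 α)) : Disjoint (m \ edgesMeeting C m) (edgesMeeting C n) := by
    refine Finset.disjoint_left.2 fun e hem hen => (mem_sdiff.1 hem).2 ?_
    exact mem_edgesMeeting.2 ⟨(mem_sdiff.1 hem).1, (mem_edgesMeeting.1 hen).2⟩
  rw [exchange, exchange, prod_union (hdisj m₁ m₂), prod_union (hdisj m₂ m₁),
    ← prod_sdiff (hsub m₁), ← prod_sdiff (hsub m₂), mul_mul_mul_comm,
    mul_comm (∏ e ∈ edgesMeeting C m₂, w e), mul_mul_mul_comm]

lemma IsPMOn.exchange [DecidableEq α] {G : SimpleGraph α} {s₁ s₂ C : Finset α}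
    {m₁ m₂ : Finset (Sym2 α)} (h₁ : IsPMOn G s₁ m₁) (h₂ : IsPMOn G s₂ m₂)
    (hC₁ : EdgeClosed C m₁) (hC₂ : EdgeClosed C m₂) :
    IsPMOn G (s₁ ∆ ((s₁ ∆ s₂) ∩ C)) (exchange C m₁ m₂) := by
  have hs : s₁ ∆ ((s₁ ∆ s₂) ∩ C) = (s₁ \ C) ∪ (s₂ ∩ C) := by
    ext v
    simp only [mem_symmDiff, mem_union, mem_inter, mem_sdiff]
    tauto
  rw [hs]
  exact (h₁.sdiff_of_edgeClosed hC₁).union (h₂.inter_of_edgeClosed hC₂)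
    (disjoint_sdiff_self_left.mono_right inter_subset_right)

/-! ### Superpositions and their components -/

/-- The superposition of two edge sets: the simple graph whose edges are those of `m₁` and `m₂`. -/
def superposition (m₁ m₂ : Finset (Sym2 α)) : SimpleGraph α :=
  SimpleGraph.fromEdgeSet {e | e ∈ m₁ ∨ e ∈ m₂}

lemma superposition_adj {m₁ m₂ : Finset (Sym2 α)} {u v : α} :
    (superposition m₁ m₂).Adj u v ↔ (s(u, v) ∈ m₁ ∨ s(u, v) ∈ m₂) ∧ u ≠ v :=
  SimpleGraph.fromEdgeSet_adj _

lemma superposition_le {G : SimpleGraph α} {s₁ s₂ : Finset α} {m₁ m₂ : Finset (Sym2 α)}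
    (h₁ : IsPMOn G s₁ m₁) (h₂ : IsPMOn G s₂ m₂) : superposition m₁ m₂ ≤ G := by
  intro u v huv
  rcases (superposition_adj.1 huv).1 with he | he
  · exact (h₁.1 _ he).1
  · exact (h₂.1 _ he).1

lemma superposition_exchange [DecidableEq α] (C : Finset α) (m₁ m₂ : Finset (Sym2 α)) :
    superposition (exchange C m₁ m₂) (exchange C m₂ m₁) = superposition m₁ m₂ := by
  ext u v
  by_cases hmeet : ∃ t ∈ s(u, v), t ∈ C <;>
    simp only [superposition_adj, mem_exchange, hmeet] <;> tauto

open Classical in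
/-- The vertex set of the component of `x` in the superposition of `m₁` and `m₂`. It is cut out of
the finite set formed by `x` and the endpoints of all edges, so that `α` may be infinite. -/
noncomputable def superpositionComponent (m₁ m₂ : Finset (Sym2 α)) (x : α) : Finset α :=
  {v ∈ insert x ((m₁ ∪ m₂).biUnion Sym2.toFinset) | (superposition m₁ m₂).Reachable x v}

variable {m₁ m₂ : Finset (Sym2 α)} {x y z t : α}

lemma mem_superpositionComponent :
    y ∈ superpositionComponent m₁ m₂ x ↔ (superposition m₁ m₂).Reachable x y := by
  classical
  simp only [superpositionComponent, mem_filter, mem_insert, mem_biUnion, mem_union,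
    Sym2.mem_toFinset, and_iff_right_iff_imp]
  intro hxy
  obtain ⟨p⟩ := hxy.symm
  cases p with
  | nil => exact Or.inl rfl
  | cons hadj _ => exact Or.inr ⟨_, (superposition_adj.1 hadj).1, Sym2.mem_mk_left _ _⟩

lemma edgeClosed_superpositionComponent {m : Finset (Sym2 α)}
    (hm : ∀ e ∈ m, e ∈ m₁ ∨ e ∈ m₂) (x : α) :
    EdgeClosed (superpositionComponent m₁ m₂ x) m := by
  intro e he u hu v hv huC
  rw [mem_superpositionComponent] at huC ⊢
  obtain rfl | huv := eq_or_ne u v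
  · exact huC
  · have he_eq : e = s(u, v) := (Sym2.mem_and_mem_iff huv).1 ⟨hu, hv⟩
    exact huC.trans (superposition_adj.2 ⟨he_eq ▸ hm e he, huv⟩).reachable

lemma edgeClosed_superpositionComponent_left (m₁ m₂ : Finset (Sym2 α)) (x : α) :
    EdgeClosed (superpositionComponent m₁ m₂ x) m₁ :=
  edgeClosed_superpositionComponent (fun _ => Or.inl) x

lemma edgeClosed_superpositionComponent_right (m₁ m₂ : Finset (Sym2 α)) (x : α) :
    EdgeClosed (superpositionComponent m₁ m₂ x) m₂ :=
  edgeClosed_superpositionComponent (fun _ => Or.inr) x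

lemma card_le_card_add_one_of_connected_induce {H : SimpleGraph α} {C : Finset α}
    {E : Finset (Sym2 α)} (hC : (H.induce (C : Set α)).Connected)
    (hE : ∀ u ∈ C, ∀ v ∈ C, H.Adj u v → s(u, v) ∈ E) : #C ≤ #E + 1 := by
  have hmem (e : (H.induce (C : Set α)).edgeSet) : e.1.map Subtype.val ∈ E := by
    obtain ⟨⟨u, v⟩, he⟩ := e
    exact hE u u.2 v v.2 he
  have hinj : Function.Injective
      fun e : (H.induce (C : Set α)).edgeSet => (⟨e.1.map Subtype.val, hmem e⟩ : E) :=
    fun e f hef => Subtype.ext (Sym2.map.injective Subtype.val_injective (congrArg Subtype.val hef))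
  calc #C = Nat.card (C : Set α) := (Nat.card_eq_finsetCard C).symm
    _ ≤ Nat.card (H.induce (C : Set α)).edgeSet + 1 := hC.card_vert_le_card_edgeSet_add_one
    _ ≤ Nat.card E + 1 := Nat.add_le_add_right (Nat.card_le_card_of_injective _ hinj) 1
    _ = #E + 1 := by rw [Nat.card_eq_finsetCard]

lemma connected_induce_superpositionComponent (m₁ m₂ : Finset (Sym2 α)) (x : α) :
    ((superposition m₁ m₂).induce (superpositionComponent m₁ m₂ x : Set α)).Connected := by
  have hsupp : (superpositionComponent m₁ m₂ x : Set α) =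
      ((superposition m₁ m₂).connectedComponentMk x).supp := by
    ext v
    rw [mem_coe, mem_superpositionComponent, SimpleGraph.ConnectedComponent.mem_supp_iff,
      SimpleGraph.ConnectedComponent.eq, SimpleGraph.reachable_comm]
  rw [hsupp]
  exact SimpleGraph.ConnectedComponent.connected_toSimpleGraph _

lemma card_superpositionComponent_le (m₁ m₂ : Finset (Sym2 α)) (x : α) :
    #(superpositionComponent m₁ m₂ x) ≤ #(edgesMeeting (superpositionComponent m₁ m₂ x) m₁) +
      #(edgesMeeting (superpositionComponent m₁ m₂ x) m₂) + 1 := by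
  classical
  refine (card_le_card_add_one_of_connected_induce
    (connected_induce_superpositionComponent m₁ m₂ x) fun u hu v _ huv => ?_).trans
    (Nat.add_le_add_right (card_union_le _ _) 1)
  have hmeet : ∃ t ∈ s(u, v), t ∈ superpositionComponent m₁ m₂ x := ⟨u, Sym2.mem_mk_left u v, hu⟩
  rw [mem_union, mem_edgesMeeting, mem_edgesMeeting]
  exact (superposition_adj.1 huv).1.imp (⟨·, hmeet⟩) (⟨·, hmeet⟩)

/-! ### Disjoint paths -/

lemma exists_isPath_forall_reachable {H G : SimpleGraph α} (hle : H ≤ G) (hxy : H.Reachable x y) :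
    ∃ p : G.Walk x y, p.IsPath ∧ ∀ u ∈ p.support, H.Reachable x u := by
  classical
  obtain ⟨p, hp⟩ := hxy.exists_isPath
  refine ⟨p.mapLe hle, (SimpleGraph.Walk.isPath_mapLe hle).2 hp, fun u hu => ?_⟩
  rw [SimpleGraph.Walk.support_mapLe_eq_support] at hu
  exact ⟨p.takeUntil u hu⟩

lemma disjointPaths_of_reachable {H G : SimpleGraph α} (hle : H ≤ G) {S : Set α}
    (hxy : H.Reachable x y) (hzt : H.Reachable z t) (hxz : ¬H.Reachable x z)
    (hSx : ∀ u ∈ S, H.Reachable x u → u = x ∨ u = y)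
    (hSz : ∀ u ∈ S, H.Reachable z u → u = z ∨ u = t) : DisjointPaths G S x y z t := by
  obtain ⟨p, hp, hpx⟩ := exists_isPath_forall_reachable hle hxy
  obtain ⟨q, hq, hqz⟩ := exists_isPath_forall_reachable hle hzt
  refine ⟨p, q, hp, hq, fun u hup huq => hxz ((hpx u hup).trans (hqz u huq).symm), ?_, ?_⟩
  · exact fun u hu hux huy huS => (hSx u huS (hpx u hu)).elim hux huy
  · exact fun u hu huz hut huS => (hSz u huS (hqz u hu)).elim huz hut

lemma DisjointPaths.symm {G : SimpleGraph α} {S : Set α} (h : DisjointPaths G S x y z t) :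
    DisjointPaths G S z t x y :=
  let ⟨p, q, hp, hq, hpq, hpS, hqS⟩ := h
  ⟨q, p, hq, hp, fun u hu hu' => hpq u hu' hu, hqS, hpS⟩

/-! ### Terminals are linked in pairs -/

lemma card_add_card_add_card_symmDiff [DecidableEq α] (s t : Finset α) :
    #s + #t + #(s ∆ t) = 2 * #(s ∪ t) := by
  have hsymm : #(s ∆ t) + #(s ∩ t) = #(s ∪ t) := by
    have hdisj : Disjoint (s ∆ t) (s ∩ t) := disjoint_symmDiff_inf s t
    rw [← card_union_of_disjoint hdisj]
    exact congrArg card (symmDiff_sup_inf s t)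
  have hunion := card_union_add_card_inter s t
  lia

section Terminals

variable [DecidableEq α] {G : SimpleGraph α} {s₁ s₂ : Finset α}

lemma even_card_symmDiff_inter_of_edgeClosed {C : Finset α} (h₁ : IsPMOn G s₁ m₁)
    (h₂ : IsPMOn G s₂ m₂) (hC₁ : EdgeClosed C m₁) (hC₂ : EdgeClosed C m₂) :
    Even #((s₁ ∆ s₂) ∩ C) := by
  have hcard₁ := (h₁.inter_of_edgeClosed hC₁).card_eq_two_mul_card
  have hcard₂ := (h₂.inter_of_edgeClosed hC₂).card_eq_two_mul_card
  have hsum := card_add_card_add_card_symmDiff (s₁ ∩ C) (s₂ ∩ C)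
  have hdistrib : (s₁ ∆ s₂) ∩ C = (s₁ ∩ C) ∆ (s₂ ∩ C) := inf_symmDiff_distrib_right _ _ _
  rw [hdistrib, Nat.even_iff]
  lia

lemma card_symmDiff_inter_superpositionComponent_le_two (h₁ : IsPMOn G s₁ m₁)
    (h₂ : IsPMOn G s₂ m₂) (x : α) : #((s₁ ∆ s₂) ∩ superpositionComponent m₁ m₂ x) ≤ 2 := by
  have hcard₁ := (h₁.inter_of_edgeClosed
    (edgeClosed_superpositionComponent_left m₁ m₂ x)).card_eq_two_mul_card
  have hcard₂ := (h₂.inter_of_edgeClosed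
    (edgeClosed_superpositionComponent_right m₁ m₂ x)).card_eq_two_mul_card
  have hedges := card_superpositionComponent_le m₁ m₂ x
  set C := superpositionComponent m₁ m₂ x
  have hsum := card_add_card_add_card_symmDiff (s₁ ∩ C) (s₂ ∩ C)
  have hunion : #(s₁ ∩ C ∪ s₂ ∩ C) ≤ #C :=
    card_le_card (union_subset inter_subset_right inter_subset_right)
  have hdistrib : (s₁ ∆ s₂) ∩ C = (s₁ ∩ C) ∆ (s₂ ∩ C) := inf_symmDiff_distrib_right _ _ _
  rw [hdistrib]
  lia

lemma exists_reachable_of_mem_symmDiff (h₁ : IsPMOn G s₁ m₁) (h₂ : IsPMOn G s₂ m₂)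
    (hx : x ∈ s₁ ∆ s₂) : ∃ y ∈ (s₁ ∆ s₂).erase x, (superposition m₁ m₂).Reachable x y := by
  have heven := even_card_symmDiff_inter_of_edgeClosed h₁ h₂
    (edgeClosed_superpositionComponent_left m₁ m₂ x)
    (edgeClosed_superpositionComponent_right m₁ m₂ x)
  have hxC : x ∈ (s₁ ∆ s₂) ∩ superpositionComponent m₁ m₂ x :=
    mem_inter.2 ⟨hx, mem_superpositionComponent.2 (SimpleGraph.Reachable.refl x)⟩
  have hone : 1 < #((s₁ ∆ s₂) ∩ superpositionComponent m₁ m₂ x) := by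
    have hpos := card_pos.2 ⟨x, hxC⟩
    rw [Nat.even_iff] at heven
    lia
  obtain ⟨y, hy, hyx⟩ := exists_mem_ne hone x
  rw [mem_inter, mem_superpositionComponent] at hy
  exact ⟨y, mem_erase.2 ⟨hyx, hy.1⟩, hy.2⟩

lemma symmDiff_inter_superpositionComponent_eq_pair (h₁ : IsPMOn G s₁ m₁) (h₂ : IsPMOn G s₂ m₂)
    (hx : x ∈ s₁ ∆ s₂) (hy : y ∈ s₁ ∆ s₂) (hxy : x ≠ y)
    (hlink : (superposition m₁ m₂).Reachable x y) :
    (s₁ ∆ s₂) ∩ superpositionComponent m₁ m₂ x = {x, y} := by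
  refine (eq_of_subset_of_card_le ?_ ?_).symm
  · simp only [insert_subset_iff, singleton_subset_iff, mem_inter, mem_superpositionComponent]
    exact ⟨⟨hx, SimpleGraph.Reachable.refl x⟩, hy, hlink⟩
  · rw [card_pair hxy]
    exact card_symmDiff_inter_superpositionComponent_le_two h₁ h₂ x

lemma eq_or_eq_of_reachable (h₁ : IsPMOn G s₁ m₁) (h₂ : IsPMOn G s₂ m₂)
    (hx : x ∈ s₁ ∆ s₂) (hy : y ∈ s₁ ∆ s₂) (hxy : x ≠ y)
    (hlink : (superposition m₁ m₂).Reachable x y) (hz : z ∈ s₁ ∆ s₂)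
    (hxz : (superposition m₁ m₂).Reachable x z) : z = x ∨ z = y := by
  have hmem : z ∈ (s₁ ∆ s₂) ∩ superpositionComponent m₁ m₂ x :=
    mem_inter.2 ⟨hz, mem_superpositionComponent.2 hxz⟩
  rw [symmDiff_inter_superpositionComponent_eq_pair h₁ h₂ hx hy hxy hlink] at hmem
  simpa only [mem_insert, mem_singleton] using hmem

lemma existsUnique_reachable_of_mem_symmDiff (h₁ : IsPMOn G s₁ m₁) (h₂ : IsPMOn G s₂ m₂)
    (hx : x ∈ s₁ ∆ s₂) :
    ∃! y, y ∈ (s₁ ∆ s₂).erase x ∧ (superposition m₁ m₂).Reachable x y := by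
  obtain ⟨y, hy, hlink⟩ := exists_reachable_of_mem_symmDiff h₁ h₂ hx
  refine ⟨y, ⟨hy, hlink⟩, fun z ⟨hz, hxz⟩ => ?_⟩
  rw [mem_erase] at hy hz
  exact (eq_or_eq_of_reachable h₁ h₂ hx hy.2 hy.1.symm hlink hz.2 hxz).resolve_left hz.1

lemma disjointPaths_of_symmDiff_eq (h₁ : IsPMOn G s₁ m₁) (h₂ : IsPMOn G s₂ m₂)
    (hT : s₁ ∆ s₂ = {x, y, z, t}) (hdist : [x, y, z, t].Nodup)
    (hlink : (superposition m₁ m₂).Reachable x y) :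
    DisjointPaths G (s₁ ∆ s₂ : Finset α) x y z t := by
  have hmem {u : α} : u ∈ s₁ ∆ s₂ ↔ u = x ∨ u = y ∨ u = z ∨ u = t := by simp [hT]
  have hx : x ∈ s₁ ∆ s₂ := hmem.2 (.inl rfl)
  have hy : y ∈ s₁ ∆ s₂ := hmem.2 (.inr (.inl rfl))
  have hz : z ∈ s₁ ∆ s₂ := hmem.2 (.inr (.inr (.inl rfl)))
  simp only [List.nodup_cons, List.mem_cons, List.not_mem_nil, or_false, not_or] at hdist
  obtain ⟨⟨hxy, hxz, -⟩, ⟨hyz, -⟩, hzt, -⟩ := hdist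
  have hxz_not : ¬(superposition m₁ m₂).Reachable x z := fun h =>
    (eq_or_eq_of_reachable h₁ h₂ hx hy hxy hlink hz h).elim (Ne.symm hxz) (Ne.symm hyz)
  have hlink_zt : (superposition m₁ m₂).Reachable z t := by
    obtain ⟨v, hv, hzv⟩ := exists_reachable_of_mem_symmDiff h₁ h₂ hz
    obtain ⟨hvz, hvT⟩ := mem_erase.1 hv
    rcases hmem.1 hvT with rfl | rfl | rfl | rfl
    · exact absurd hzv.symm hxz_not
    · exact absurd (hlink.trans hzv.symm) hxz_not
    · exact absurd rfl hvz
    · exact hzv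
  have ht : t ∈ s₁ ∆ s₂ := hmem.2 (.inr (.inr (.inr rfl)))
  exact disjointPaths_of_reachable (superposition_le h₁ h₂) hlink hlink_zt hxz_not
    (fun _ hu => eq_or_eq_of_reachable h₁ h₂ hx hy hxy hlink hu)
    (fun _ hu => eq_or_eq_of_reachable h₁ h₂ hz ht hzt hlink_zt hu)

end Terminals

/-! ### Pairs of matchings linking two terminals -/

/-- `p` consists of a perfect matching of `G[s₁]` and a perfect matching of `G[s₂]` whose
superposition links `x` to `y`. -/
def IsLinkedPair (G : SimpleGraph α) (s₁ s₂ : Finset α) (x y : α)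
    (p : Finset (Sym2 α) × Finset (Sym2 α)) : Prop :=
  (IsPMOn G s₁ p.1 ∧ IsPMOn G s₂ p.2) ∧ (superposition p.1 p.2).Reachable x y

open Classical in
/-- The part of `pmSum G w s₁ * pmSum G w s₂` that comes from the pairs of perfect matchings whose
superposition links `x` to `y`. -/
noncomputable def linkedSum [Fintype α] [CommSemiring R] (G : SimpleGraph α) (w : Sym2 α → R)
    (s₁ s₂ : Finset α) (x y : α) : R :=
  ∑ p with IsLinkedPair G s₁ s₂ x y p, (∏ e ∈ p.1, w e) * ∏ e ∈ p.2, w e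

lemma linkedSum_comm [Fintype α] [CommSemiring R] (G : SimpleGraph α) (w : Sym2 α → R)
    (s₁ s₂ : Finset α) (x y : α) :
    linkedSum G w s₁ s₂ x y = linkedSum G w s₁ s₂ y x := by
  classical
  refine sum_congr (filter_congr fun p _ => ?_) fun _ _ => rfl
  rw [IsLinkedPair, IsLinkedPair, SimpleGraph.reachable_comm]

section LinkedSum

variable [DecidableEq α]

/-- Exchange the two members of `p` on the component of `x` in their superposition. -/
noncomputable def exchangeComponent (x : α) (p : Finset (Sym2 α) × Finset (Sym2 α)) :
    Finset (Sym2 α) × Finset (Sym2 α) :=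
  (exchange (superpositionComponent p.1 p.2 x) p.1 p.2,
    exchange (superpositionComponent p.1 p.2 x) p.2 p.1)

lemma exchangeComponent_involutive (x : α) : Function.Involutive (exchangeComponent x) := by
  rintro ⟨m₁, m₂⟩
  have hC : superpositionComponent (exchangeComponent x (m₁, m₂)).1
      (exchangeComponent x (m₁, m₂)).2 x = superpositionComponent m₁ m₂ x := by
    ext v
    simp only [mem_superpositionComponent, exchangeComponent, superposition_exchange]
  rw [exchangeComponent, hC]
  exact Prod.ext (exchange_exchange _ _ _) (exchange_exchange _ _ _)

lemma IsLinkedPair.exchangeComponent {G : SimpleGraph α} {s₁ s₂ : Finset α}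
    {p : Finset (Sym2 α) × Finset (Sym2 α)}
    (hp : IsLinkedPair G s₁ s₂ x y p) (hx : x ∈ s₁ ∆ s₂) (hy : y ∈ s₁ ∆ s₂) (hxy : x ≠ y) :
    IsLinkedPair G (s₁ ∆ {x, y}) (s₂ ∆ {x, y}) x y (exchangeComponent x p) := by
  obtain ⟨⟨h₁, h₂⟩, hlink⟩ := hp
  have hpair := symmDiff_inter_superpositionComponent_eq_pair h₁ h₂ hx hy hxy hlink
  have hC₁ := edgeClosed_superpositionComponent_left p.1 p.2 x
  have hC₂ := edgeClosed_superpositionComponent_right p.1 p.2 x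
  refine ⟨⟨?_, ?_⟩, ?_⟩
  · exact hpair ▸ h₁.exchange h₂ hC₁ hC₂
  · exact hpair ▸ symmDiff_comm s₁ s₂ ▸ h₂.exchange h₁ hC₂ hC₁
  · simpa only [_root_.exchangeComponent, superposition_exchange] using hlink

variable [Fintype α] [CommSemiring R] (G : SimpleGraph α) (w : Sym2 α → R) {s₁ s₂ : Finset α}

lemma linkedSum_symmDiff_pair (hx : x ∈ s₁ ∆ s₂) (hy : y ∈ s₁ ∆ s₂) (hxy : x ≠ y) :
    linkedSum G w (s₁ ∆ {x, y}) (s₂ ∆ {x, y}) x y = linkedSum G w s₁ s₂ x y := by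
  classical
  have hterm : (s₁ ∆ {x, y}) ∆ (s₂ ∆ {x, y}) = s₁ ∆ s₂ := by
    rw [symmDiff_symmDiff_symmDiff_comm, symmDiff_self, symmDiff_bot]
  refine sum_nbij' (exchangeComponent x) (exchangeComponent x) (fun p hp => ?_) (fun p hp => ?_)
    (fun p _ => exchangeComponent_involutive x p) (fun p _ => exchangeComponent_involutive x p)
    (fun p _ => (prod_exchange_mul_prod_exchange w _ p.1 p.2).symm)
  · rw [mem_filter_univ] at hp ⊢
    simpa only [symmDiff_symmDiff_cancel_right] using
      hp.exchangeComponent (hterm ▸ hx) (hterm ▸ hy) hxy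
  · rw [mem_filter_univ] at hp ⊢
    exact hp.exchangeComponent hx hy hxy

lemma linkedSum_eq_zero_of_not_disjointPaths (hT : s₁ ∆ s₂ = {x, y, z, t})
    (hdist : [x, y, z, t].Nodup) (hnot : ¬DisjointPaths G (s₁ ∆ s₂ : Finset α) x y z t) :
    linkedSum G w s₁ s₂ x y = 0 := by
  classical
  rw [linkedSum, filter_false_of_mem fun p _ hp => ?_, sum_empty]
  exact hnot (disjointPaths_of_symmDiff_eq hp.1.1 hp.1.2 hT hdist hp.2)

variable {T : Finset α}

lemma compl_singleton_symmDiff_compl_erase (hx : x ∈ T) : {x}ᶜ ∆ (T.erase x)ᶜ = T := by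
  rw [compl_symmDiff_compl]
  ext v
  simp only [mem_symmDiff, mem_singleton, mem_erase]
  grind

lemma linkedSum_compl_comm (hx : x ∈ T) (hy : y ∈ T) :
    linkedSum G w {x}ᶜ (T.erase x)ᶜ x y = linkedSum G w {y}ᶜ (T.erase y)ᶜ y x := by
  obtain rfl | hxy := eq_or_ne x y
  · rfl
  have hsingleton : ({y}ᶜ : Finset α) = {x}ᶜ ∆ {x, y} := by
    ext v
    simp only [mem_symmDiff, mem_compl, mem_insert, mem_singleton]
    grind
  have herase : (T.erase y)ᶜ = (T.erase x)ᶜ ∆ {x, y} := by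
    ext v
    simp only [mem_symmDiff, mem_compl, mem_erase, mem_insert, mem_singleton]
    grind
  have hterm := compl_singleton_symmDiff_compl_erase hx
  rw [linkedSum_comm G w {y}ᶜ, hsingleton, herase,
    linkedSum_symmDiff_pair G w (hterm.symm ▸ hx) (hterm.symm ▸ hy) hxy]

lemma linkedSum_compl_eq_zero_of_mem_pair {a₁ a₂ b₁ b₂ : α} (hdist : [a₁, a₂, b₁, b₂].Nodup)
    (hT : T = {a₁, a₂, b₁, b₂}) (hnot : ¬DisjointPaths G T a₁ a₂ b₁ b₂)
    (hx : x ∈ ({a₁, a₂} : Finset α)) (hy : y ∈ ({a₁, a₂} : Finset α)) (hxy : x ≠ y) :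
    linkedSum G w {x}ᶜ (T.erase x)ᶜ x y = 0 := by
  have ha₁ : a₁ ∈ T := by simp [hT]
  have ha₂ : a₂ ∈ T := by simp [hT]
  have hterm := compl_singleton_symmDiff_compl_erase ha₁
  have hzero : linkedSum G w {a₁}ᶜ (T.erase a₁)ᶜ a₁ a₂ = 0 :=
    linkedSum_eq_zero_of_not_disjointPaths G w (hterm.trans hT) hdist (hterm.symm ▸ hnot)
  rw [mem_insert, mem_singleton] at hx hy
  obtain ⟨rfl | rfl, rfl | rfl⟩ := And.intro hx hy
  · exact absurd rfl hxy
  · exact hzero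
  · rw [linkedSum_compl_comm G w ha₂ ha₁, hzero]
  · exact absurd rfl hxy

end LinkedSum

/-! ### Condensation -/

variable [Fintype α] [DecidableEq α] [CommRing R] (G : SimpleGraph α) (w : Sym2 α → R)

lemma pmSum_mul_pmSum_eq_sum_linkedSum {s₁ s₂ : Finset α} (hx : x ∈ s₁ ∆ s₂) :
    pmSum G w s₁ * pmSum G w s₂ = ∑ y ∈ (s₁ ∆ s₂).erase x, linkedSum G w s₁ s₂ x y := by
  classical
  have hlinked (y : α) : linkedSum G w s₁ s₂ x y =
      ∑ p : Finset (Sym2 α) × Finset (Sym2 α) with IsPMOn G s₁ p.1 ∧ IsPMOn G s₂ p.2,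
        if (superposition p.1 p.2).Reachable x y then (∏ e ∈ p.1, w e) * ∏ e ∈ p.2, w e else 0 := by
    rw [linkedSum, ← sum_filter, filter_filter]
    exact sum_congr (filter_congr fun _ _ => Iff.rfl) fun _ _ => rfl
  simp only [hlinked, pmSum]
  rw [sum_comm, sum_mul_sum, ← sum_product', ← filter_product, univ_product_univ]
  refine sum_congr rfl fun p hp => ?_
  obtain ⟨h₁, h₂⟩ := (mem_filter_univ p).1 hp
  obtain ⟨y, ⟨hy, hlink⟩, huniq⟩ := existsUnique_reachable_of_mem_symmDiff h₁ h₂ hx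
  rw [sum_eq_single_of_mem y hy fun z hz hzy => if_neg fun hxz => hzy (huniq z ⟨hz, hxz⟩),
    if_pos hlink]

variable {A B : Finset α}

lemma sum_pmSum_compl_mul_pmSum_compl_eq_sum_sum_linkedSum (hAB : Disjoint A B)
    (hA : ∀ x ∈ A, ∀ y ∈ A, x ≠ y → linkedSum G w {x}ᶜ ((A ∪ B).erase x)ᶜ x y = 0) :
    ∑ a ∈ A, pmSum G w {a}ᶜ * pmSum G w ((A ∪ B).erase a)ᶜ =
      ∑ a ∈ A, ∑ b ∈ B, linkedSum G w {a}ᶜ ((A ∪ B).erase a)ᶜ a b := by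
  refine sum_congr rfl fun a ha => ?_
  have hterm := compl_singleton_symmDiff_compl_erase (mem_union_left B ha)
  rw [pmSum_mul_pmSum_eq_sum_linkedSum G w (hterm.symm ▸ mem_union_left B ha), hterm]
  refine (sum_subset (fun b hb => ?_) fun y hy hyB => ?_).symm
  · exact mem_erase.2 ⟨(disjoint_iff_ne.1 hAB a ha b hb).symm, mem_union_right A hb⟩
  · obtain ⟨hya, hyAB⟩ := mem_erase.1 hy
    exact hA a ha y ((mem_union.1 hyAB).resolve_right hyB) hya.symm

theorem sum_pmSum_compl_mul_pmSum_compl_eq_of_linkedSum_eq_zero (hAB : Disjoint A B)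
    (hA : ∀ x ∈ A, ∀ y ∈ A, x ≠ y → linkedSum G w {x}ᶜ ((A ∪ B).erase x)ᶜ x y = 0)
    (hB : ∀ x ∈ B, ∀ y ∈ B, x ≠ y → linkedSum G w {x}ᶜ ((A ∪ B).erase x)ᶜ x y = 0) :
    ∑ a ∈ A, pmSum G w {a}ᶜ * pmSum G w ((A ∪ B).erase a)ᶜ =
      ∑ b ∈ B, pmSum G w {b}ᶜ * pmSum G w ((A ∪ B).erase b)ᶜ := by
  rw [sum_pmSum_compl_mul_pmSum_compl_eq_sum_sum_linkedSum G w hAB hA, union_comm,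
    sum_pmSum_compl_mul_pmSum_compl_eq_sum_sum_linkedSum G w hAB.symm (union_comm A B ▸ hB),
    sum_comm]
  exact sum_congr rfl fun b hb => sum_congr rfl fun a ha =>
    linkedSum_compl_comm G w (mem_union_right B ha) (mem_union_left A hb)

end Condensation

lemma NoncrossingList.not_disjointPaths {α : Type*} {G : SimpleGraph α} {a b c d : α}
    (h : NoncrossingList G [a, b, c, d]) : ¬DisjointPaths G {v | v ∈ [a, b, c, d]} a c b d :=
  h ⟨0, by simp⟩ ⟨1, by simp⟩ ⟨2, by simp⟩ ⟨3, by simp⟩ (by simp) (by simp) (by simp)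

/-- Condensation identity for a graph with an odd number of vertices
(Corollary 2.7). -/
theorem condensation_odd_four_vertices {α R : Type*} [Fintype α] [DecidableEq α] [CommRing R]
    (G : SimpleGraph α) (w : Sym2 α → R) (n : ℕ)
    (hcard : Fintype.card α = 2 * n + 1)
    (a₁ b₁ a₂ b₂ : α)
    (hdist : ([a₁, b₁, a₂, b₂] : List α).Nodup)
    (hnc : NoncrossingList G [a₁, b₁, a₂, b₂]) :
    pmSum G w (Finset.univ \ {a₁}) * pmSum G w (Finset.univ \ {a₂, b₁, b₂}) +
      pmSum G w (Finset.univ \ {a₂}) * pmSum G w (Finset.univ \ {a₁, b₁, b₂}) =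
    pmSum G w (Finset.univ \ {b₁}) * pmSum G w (Finset.univ \ {a₁, a₂, b₂}) +
      pmSum G w (Finset.univ \ {b₂}) * pmSum G w (Finset.univ \ {a₁, a₂, b₁}) := by
  set T : Finset α := {a₁, a₂} ∪ {b₁, b₂} with hT
  have hcoe : {v | v ∈ [a₁, b₁, a₂, b₂]} = (T : Set α) := by
    ext v
    simp only [hT, Set.mem_ofPred_eq, List.mem_cons, List.not_mem_nil, or_false, Finset.coe_union,
      Finset.coe_pair, Set.mem_union, Set.mem_insert_iff, Set.mem_singleton_iff]
    tauto
  have hcross : ¬DisjointPaths G T a₁ a₂ b₁ b₂ := hcoe ▸ hnc.not_disjointPaths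
  have hdist_ab : [a₁, a₂, b₁, b₂].Nodup := by grind
  have hdist_ba : [b₁, b₂, a₁, a₂].Nodup := by grind
  have hcondense := sum_pmSum_compl_mul_pmSum_compl_eq_of_linkedSum_eq_zero G w
    (A := {a₁, a₂}) (B := {b₁, b₂}) (by simp only [Finset.disjoint_left]; grind)
    (fun x hx y hy => linkedSum_compl_eq_zero_of_mem_pair G w hdist_ab (by grind) hcross hx hy)
    (fun x hx y hy => linkedSum_compl_eq_zero_of_mem_pair G w hdist_ba (by grind)
      (fun h => hcross h.symm) hx hy)
  have herase_a₁ : T.erase a₁ = {a₂, b₁, b₂} := by grind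
  have herase_a₂ : T.erase a₂ = {a₁, b₁, b₂} := by grind
  have herase_b₁ : T.erase b₁ = {a₁, a₂, b₂} := by grind
  have herase_b₂ : T.erase b₂ = {a₁, a₂, b₁} := by grind
  simp only [← Finset.compl_eq_univ_sdiff]
  rwa [Finset.sum_pair (by grind), Finset.sum_pair (by grind), ← hT, herase_a₁, herase_a₂,
    herase_b₁, herase_b₂] at hcondense
end

section
/- Let G be a finite simple graph, let A = {a_1,…,a_n} be a set of distinct vertices partitioned into disjoint subsets A_K and A_H, and suppose the induced subgraph H = G−A_K has exactly one perfect matching M_H. Then the number of perfect matchings of K = G−A_H equals the number of families of pairwise vertex-disjoint M_H-alternating paths in G whose set of path-endpoints is exactly A (each vertex of A being an endpoint of exactly one path of the family). -/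
/-!
A nest `F` is sent to the symmetric difference of `M_H` with the set of edges of its paths. An edge
set `D` alternates with respect to `M_H` and has boundary `A` exactly when its symmetric difference
with `M_H` is a perfect matching of `K`. Inside such a `D` every vertex has at most two edges, so
the paths of `D` joining vertices of `A` are components of `D` and partition `A` into pairs; hence a
nest is determined by its edges. Conversely, if `N` is a perfect matching of `K`, then the paths in
`M_H ∆ N` form a nest `F` for `N` as well as for `M_H`. So `N ∆ E(F)` is a perfect matching of `H`
and equals `M_H` by uniqueness, which means that `M_H ∆ N` has no cycles and is the edge set of `F`.
-/

section Walks

variable {α : Type*} {G : SimpleGraph α} {x y z v : α} {P : G.Walk x y}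

lemma head?_edges_of_not_nil (hP : ¬P.Nil) : P.edges.head? = some s(x, P.snd) := by
  rw [List.head?_eq_some_head (mt SimpleGraph.Walk.edges_eq_nil.1 hP),
    SimpleGraph.Walk.head_edges_eq_mk_start_snd]

lemma getLast?_edges_of_not_nil (hP : ¬P.Nil) : P.edges.getLast? = some s(P.penultimate, y) := by
  rw [List.getLast?_eq_some_getLast (mt SimpleGraph.Walk.edges_eq_nil.1 hP),
    SimpleGraph.Walk.getLast_edges_eq_mk_penultimate_end]

lemma eq_mk_start_snd_of_isPath (hP : P.IsPath) {e : Sym2 α} (he : e ∈ P.edges) (hx : x ∈ e) :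
    e = s(x, P.snd) := by
  obtain ⟨w, rfl⟩ := hx
  rw [hP.eq_snd_of_mem_edges he]

lemma eq_mk_penultimate_end_of_isPath (hP : P.IsPath) {e : Sym2 α} (he : e ∈ P.edges)
    (hy : y ∈ e) : e = s(P.penultimate, y) := by
  obtain ⟨w, rfl⟩ := hy
  rw [hP.eq_penultimate_of_mem_edges he, Sym2.eq_swap]

lemma forall_mem_support_iff_start_mem {S : Set α}
    (hS : ∀ e ∈ P.edges, ∀ u ∈ e, ∀ w ∈ e, u ∈ S → w ∈ S) : ∀ v ∈ P.support, (v ∈ S ↔ x ∈ S) := by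
  induction P with
  | nil => simp
  | @cons x w y hadj P ih =>
    simp only [SimpleGraph.Walk.edges_cons, List.mem_cons, forall_eq_or_imp] at hS
    have hxw : x ∈ S ↔ w ∈ S :=
      ⟨hS.1 x (by simp) w (by simp), hS.1 w (by simp) x (by simp)⟩
    intro v hv
    rcases List.mem_cons.1 hv with rfl | hv
    · rfl
    · rw [hxw, ih hS.2 v hv]

lemma sigma_mk_eq_of_mem_edges_iff {Q : G.Walk x z} (hP : P.IsPath) (hQ : Q.IsPath)
    (hPQ : ∀ e, e ∈ P.edges ↔ e ∈ Q.edges) : (⟨y, P⟩ : Σ y, G.Walk x y) = ⟨z, Q⟩ := by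
  induction P with
  | @nil x =>
    cases Q with
    | nil => rfl
    | @cons _ w _ _ Q => exact absurd ((hPQ s(x, w)).2 (by simp)) (by simp)
  | @cons x w y hadj P ih =>
    cases Q with
    | nil => exact absurd ((hPQ s(z, w)).1 (by simp)) (by simp)
    | @cons _ w' _ hadj' Q =>
      obtain rfl : w = w' := by
        simpa using hQ.eq_snd_of_mem_edges ((hPQ s(x, w)).1 (by simp))
      rw [SimpleGraph.Walk.cons_isPath_iff] at hP hQ
      have hPQ' : ∀ e, e ∈ P.edges ↔ e ∈ Q.edges := by
        intro e
        by_cases hx : x ∈ e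
        · exact iff_of_false (fun he => hP.2 (P.mem_support_of_mem_edges he hx))
            (fun he => hQ.2 (Q.mem_support_of_mem_edges he hx))
        · have hne : e ≠ s(x, w) := by rintro rfl; simp at hx
          simpa [hne] using hPQ e
      cases ih hP.1 hQ.1 hPQ'
      rfl

lemma exists_mem_and_notMem_edges_of_interior {M : Finset (Sym2 α)} (hP : P.IsPath)
    (halt : P.edges.IsChain fun e f => e ∈ M ↔ f ∉ M) (hv : v ∈ P.support) (hx : v ≠ x)
    (hy : v ≠ y) :
    ∃ e ∈ P.edges, ∃ f ∈ P.edges, (v ∈ e ∧ e ∈ M) ∧ (v ∈ f ∧ f ∉ M) ∧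
      ∀ g ∈ P.edges, v ∈ g → g = e ∨ g = f := by
  obtain ⟨Q, R, rfl⟩ := SimpleGraph.Walk.mem_support_iff_exists_append.1 hv
  have hQ : ¬Q.Nil := SimpleGraph.Walk.not_nil_of_ne hx.symm
  have hR : ¬R.Nil := SimpleGraph.Walk.not_nil_of_ne hy
  have hincident : ∀ g ∈ (Q.append R).edges, v ∈ g →
      g = s(Q.penultimate, v) ∨ g = s(v, R.snd) := by
    intro g hg hvg
    rw [SimpleGraph.Walk.edges_append, List.mem_append] at hg
    exact hg.imp (eq_mk_penultimate_end_of_isPath hP.of_append_left · hvg)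
      (eq_mk_start_snd_of_isPath hP.of_append_right · hvg)
  rw [SimpleGraph.Walk.edges_append] at halt ⊢
  have hcolour : s(Q.penultimate, v) ∈ M ↔ s(v, R.snd) ∉ M :=
    (List.isChain_append.1 halt).2.2 _ (getLast?_edges_of_not_nil hQ) _
      (head?_edges_of_not_nil hR)
  have hQmem := List.mem_append_left R.edges (Q.mk_penultimate_end_mem_edges hQ)
  have hRmem := List.mem_append_right Q.edges (R.mk_start_snd_mem_edges hR)
  rw [SimpleGraph.Walk.edges_append] at hincident
  by_cases hM : s(Q.penultimate, v) ∈ M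
  · exact ⟨_, hQmem, _, hRmem, ⟨by simp, hM⟩, ⟨by simp, hcolour.1 hM⟩, hincident⟩
  · exact ⟨_, hRmem, _, hQmem, ⟨by simp, by tauto⟩, ⟨by simp, hM⟩,
      fun g hg hvg => (hincident g hg hvg).symm⟩

end Walks

/-- The edge set `D` alternates between `M` and its complement with boundary `A`: a vertex outside
`A` meets no edge of `D`, or one edge of `D` in `M` and one outside `M`; a vertex `v` of `A` meets
exactly one edge of `D`, which lies in `M` iff `v` lies in the set `s` of vertices matched by `M`.
These are the edge sets in which alternating paths with endpoints in `A` are followed. -/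
structure IsAltEdgeSet {α : Type*} (G : SimpleGraph α) (s : Finset α) (M : Finset (Sym2 α))
    (A : Finset α) (D : Finset (Sym2 α)) : Prop where
  mem_edgeSet : ∀ e ∈ D, e ∈ G.edgeSet
  eq_of_mem : ∀ ⦃v e f⦄, e ∈ D → f ∈ D → v ∈ e → v ∈ f → (e ∈ M ↔ f ∈ M) → e = f
  exists_mem_of_boundary : ∀ v ∈ A, ∃ e ∈ D, v ∈ e
  mem_iff_of_boundary : ∀ v ∈ A, ∀ e ∈ D, v ∈ e → (e ∈ M ↔ v ∈ s)
  exists_mem_of_notMem_boundary :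
    ∀ v ∉ A, ∀ e ∈ D, v ∈ e → ∃ f ∈ D, v ∈ f ∧ (f ∈ M ↔ e ∉ M)

section Matchings

variable {α : Type*} {G : SimpleGraph α} {s A : Finset α} {M D : Finset (Sym2 α)} {v : α}
  {e f : Sym2 α}

lemma IsPMOn.mem_of_mem_edge (hM : IsPMOn G s M) (he : e ∈ M) (hv : v ∈ e) : v ∈ s :=
  (hM.1 e he).2 v hv

lemma IsPMOn.eq_of_mem (hM : IsPMOn G s M) (he : e ∈ M) (hf : f ∈ M) (hve : v ∈ e)
    (hvf : v ∈ f) : e = f :=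
  (hM.2 v (hM.mem_of_mem_edge he hve)).unique ⟨he, hve⟩ ⟨hf, hvf⟩

lemma IsPMOn.exists_mem (hM : IsPMOn G s M) (hv : v ∈ s) : ∃ e ∈ M, v ∈ e :=
  (hM.2 v hv).exists

variable [DecidableEq α]

lemma IsAltEdgeSet.mem_symmDiff_of_mem_edge (hM : IsPMOn G s M) (hD : IsAltEdgeSet G s M A D)
    (he : e ∈ symmDiff M D) (hv : v ∈ e) : v ∈ symmDiff s A := by
  rw [Finset.mem_symmDiff] at he ⊢
  rcases he with ⟨heM, heD⟩ | ⟨heD, heM⟩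
  · have hvs := hM.mem_of_mem_edge heM hv
    refine Or.inl ⟨hvs, fun hvA => ?_⟩
    obtain ⟨f, hfD, hvf⟩ := hD.exists_mem_of_boundary v hvA
    have hfM := (hD.mem_iff_of_boundary v hvA f hfD hvf).2 hvs
    exact heD (hM.eq_of_mem heM hfM hv hvf ▸ hfD)
  · by_cases hvA : v ∈ A
    · exact Or.inr ⟨hvA, mt (hD.mem_iff_of_boundary v hvA e heD hv).2 heM⟩
    · obtain ⟨f, -, hvf, hfM⟩ := hD.exists_mem_of_notMem_boundary v hvA e heD hv
      exact Or.inl ⟨hM.mem_of_mem_edge (hfM.2 heM) hvf, hvA⟩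

lemma IsAltEdgeSet.exists_mem_symmDiff (hM : IsPMOn G s M) (hD : IsAltEdgeSet G s M A D)
    (hv : v ∈ symmDiff s A) : ∃ e ∈ symmDiff M D, v ∈ e := by
  simp only [Finset.mem_symmDiff] at hv ⊢
  rcases hv with ⟨hvs, hvA⟩ | ⟨hvA, hvs⟩
  · obtain ⟨e, heM, hve⟩ := hM.exists_mem hvs
    by_cases heD : e ∈ D
    · obtain ⟨f, hfD, hvf, hfM⟩ := hD.exists_mem_of_notMem_boundary v hvA e heD hve
      exact ⟨f, Or.inr ⟨hfD, fun h => hfM.1 h heM⟩, hvf⟩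
    · exact ⟨e, Or.inl ⟨heM, heD⟩, hve⟩
  · obtain ⟨e, heD, hve⟩ := hD.exists_mem_of_boundary v hvA
    exact ⟨e, Or.inr ⟨heD, mt (hD.mem_iff_of_boundary v hvA e heD hve).1 hvs⟩, hve⟩

lemma IsAltEdgeSet.eq_of_mem_symmDiff (hM : IsPMOn G s M) (hD : IsAltEdgeSet G s M A D)
    (he : e ∈ symmDiff M D) (hf : f ∈ symmDiff M D) (hve : v ∈ e) (hvf : v ∈ f) : e = f := by
  have not_mixed : ∀ ⦃g h⦄, g ∈ M → g ∉ D → h ∈ D → h ∉ M → v ∈ g → v ∉ h := by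
    intro g h hgM hgD hhD hhM hvg hvh
    have hvs := hM.mem_of_mem_edge hgM hvg
    have hvA : v ∉ A := fun hvA => hhM ((hD.mem_iff_of_boundary v hvA h hhD hvh).2 hvs)
    obtain ⟨k, hkD, hvk, hkM⟩ := hD.exists_mem_of_notMem_boundary v hvA h hhD hvh
    exact hgD (hM.eq_of_mem hgM (hkM.2 hhM) hvg hvk ▸ hkD)
  rw [Finset.mem_symmDiff] at he hf
  rcases he with ⟨heM, heD⟩ | ⟨heD, heM⟩ <;> rcases hf with ⟨hfM, hfD⟩ | ⟨hfD, hfM⟩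
  · exact hM.eq_of_mem heM hfM hve hvf
  · exact absurd hvf (not_mixed heM heD hfD hfM hve)
  · exact absurd hve (not_mixed hfM hfD heD heM hvf)
  · exact hD.eq_of_mem heD hfD hve hvf (iff_of_false heM hfM)

lemma IsAltEdgeSet.isPMOn_symmDiff (hM : IsPMOn G s M) (hD : IsAltEdgeSet G s M A D) :
    IsPMOn G (symmDiff s A) (symmDiff M D) := by
  refine ⟨fun e he => ⟨?_, fun v => hD.mem_symmDiff_of_mem_edge hM he⟩, fun v hv => ?_⟩
  · rcases Finset.mem_symmDiff.1 he with ⟨heM, -⟩ | ⟨heD, -⟩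
    · exact (hM.1 e heM).1
    · exact hD.mem_edgeSet e heD
  · obtain ⟨e, he, hve⟩ := hD.exists_mem_symmDiff hM hv
    exact ⟨e, ⟨he, hve⟩, fun f hf => hD.eq_of_mem_symmDiff hM hf.1 he hf.2 hve⟩

lemma IsPMOn.isAltEdgeSet_symmDiff {t : Finset α} {N : Finset (Sym2 α)} (hM : IsPMOn G s M)
    (hN : IsPMOn G t N) : IsAltEdgeSet G s M (symmDiff s t) (symmDiff M N) where
  mem_edgeSet e he := by
    rcases Finset.mem_symmDiff.1 he with ⟨heM, -⟩ | ⟨heN, -⟩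
    · exact (hM.1 e heM).1
    · exact (hN.1 e heN).1
  eq_of_mem v e f he hf hve hvf hef := by
    rw [Finset.mem_symmDiff] at he hf
    rcases he with ⟨heM, -⟩ | ⟨heN, heM⟩
    · exact hM.eq_of_mem heM (hef.1 heM) hve hvf
    · have hfN : f ∈ N := by tauto
      exact hN.eq_of_mem heN hfN hve hvf
  exists_mem_of_boundary v hv := by
    simp only [Finset.mem_symmDiff] at hv ⊢
    rcases hv with ⟨hvs, hvt⟩ | ⟨hvt, hvs⟩
    · obtain ⟨e, heM, hve⟩ := hM.exists_mem hvs
      exact ⟨e, Or.inl ⟨heM, fun heN => hvt (hN.mem_of_mem_edge heN hve)⟩, hve⟩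
    · obtain ⟨e, heN, hve⟩ := hN.exists_mem hvt
      exact ⟨e, Or.inr ⟨heN, fun heM => hvs (hM.mem_of_mem_edge heM hve)⟩, hve⟩
  mem_iff_of_boundary v hv e he hve := by
    have hvs : e ∈ M → v ∈ s := fun heM => hM.mem_of_mem_edge heM hve
    have hvt : e ∈ N → v ∈ t := fun heN => hN.mem_of_mem_edge heN hve
    rw [Finset.mem_symmDiff] at hv he
    tauto
  exists_mem_of_notMem_boundary v hv e he hve := by
    simp only [Finset.mem_symmDiff] at hv he ⊢
    rcases he with ⟨heM, heN⟩ | ⟨heN, heM⟩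
    · have hvs : v ∈ s := hM.mem_of_mem_edge heM hve
      obtain ⟨f, hfN, hvf⟩ := hN.exists_mem (v := v) (by tauto)
      have hfM : f ∉ M := fun hfM => heN (hM.eq_of_mem heM hfM hve hvf ▸ hfN)
      exact ⟨f, Or.inr ⟨hfN, hfM⟩, hvf, by tauto⟩
    · have hvt : v ∈ t := hN.mem_of_mem_edge heN hve
      obtain ⟨f, hfM, hvf⟩ := hM.exists_mem (v := v) (by tauto)
      have hfN : f ∉ N := fun hfN => heM (hN.eq_of_mem heN hfN hve hvf ▸ hfM)
      exact ⟨f, Or.inl ⟨hfM, hfN⟩, hvf, by tauto⟩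

end Matchings

section Nests

variable {α : Type*} {G : SimpleGraph α} {s A : Finset α} {M : Finset (Sym2 α)} {v : α}
  {F : Finset (Σ x : α, Σ y : α, G.Walk x y)} {p q : Σ x : α, Σ y : α, G.Walk x y}

lemma mem_support_of_eq_endpoint (hv : v = p.1 ∨ v = p.2.1) : v ∈ p.2.2.support := by
  rcases hv with rfl | rfl <;> simp

lemma IsAltPathNest.eq_of_mem_support (hF : IsAltPathNest G s M A F) (hp : p ∈ F) (hq : q ∈ F)
    (hvp : v ∈ p.2.2.support) (hvq : v ∈ q.2.2.support) : p = q :=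
  by_contra fun hpq => hF.2.1 p hp q hq hpq v hvp hvq

lemma IsAltPathNest.eq_endpoint_iff_mem (hF : IsAltPathNest G s M A F) (hp : p ∈ F)
    (hv : v ∈ p.2.2.support) : v = p.1 ∨ v = p.2.1 ↔ v ∈ A := by
  constructor
  · rintro (rfl | rfl)
    exacts [(hF.2.2.1 p hp).1, (hF.2.2.1 p hp).2]
  · intro hvA
    obtain ⟨q, hq, hvq⟩ := (hF.2.2.2 v hvA).exists
    rwa [hF.eq_of_mem_support hp hq hv (mem_support_of_eq_endpoint hvq)]

variable [DecidableEq α]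

lemma IsAltPath.isAltEdgeSet {x y : α} {P : G.Walk x y} (hP : IsAltPath G s M P) :
    IsAltEdgeSet G s M {x, y} P.edges.toFinset := by
  obtain ⟨hpath, hne, halt, hstart, hend⟩ := hP
  have hnil : ¬P.Nil := mt SimpleGraph.Walk.edges_eq_nil.2 hne
  replace hstart := hstart _ (head?_edges_of_not_nil hnil)
  replace hend := hend _ (getLast?_edges_of_not_nil hnil)
  have interior : ∀ ⦃v⦄, ¬(v = x ∨ v = y) → ∀ e ∈ P.edges, v ∈ e →
      ∃ e ∈ P.edges, ∃ f ∈ P.edges, (v ∈ e ∧ e ∈ M) ∧ (v ∈ f ∧ f ∉ M) ∧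
        ∀ g ∈ P.edges, v ∈ g → g = e ∨ g = f := by
    intro v hv e he hve
    rw [not_or] at hv
    exact exists_mem_and_notMem_edges_of_interior hpath halt (P.mem_support_of_mem_edges he hve)
      hv.1 hv.2
  constructor <;> simp only [List.mem_toFinset, Finset.mem_insert, Finset.mem_singleton]
  · exact fun e he => P.edges_subset_edgeSet he
  · intro v e f he hf hve hvf hef
    by_cases hv : v = x ∨ v = y
    · rcases hv with rfl | rfl
      · rw [eq_mk_start_snd_of_isPath hpath he hve, eq_mk_start_snd_of_isPath hpath hf hvf]
      · rw [eq_mk_penultimate_end_of_isPath hpath he hve,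
          eq_mk_penultimate_end_of_isPath hpath hf hvf]
    · obtain ⟨g, -, h, -, ⟨-, hgM⟩, ⟨-, hhM⟩, hincident⟩ := interior hv e he hve
      rcases hincident e he hve with rfl | rfl <;> rcases hincident f hf hvf with rfl | rfl <;>
        tauto
  · rintro v (rfl | rfl)
    · exact ⟨_, P.mk_start_snd_mem_edges hnil, by simp⟩
    · exact ⟨_, P.mk_penultimate_end_mem_edges hnil, by simp⟩
  · rintro v (rfl | rfl) e he hve
    · rwa [eq_mk_start_snd_of_isPath hpath he hve]
    · rwa [eq_mk_penultimate_end_of_isPath hpath he hve]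
  · intro v hv e he hve
    obtain ⟨g, hg, h, hh, ⟨hvg, hgM⟩, ⟨hvh, hhM⟩, -⟩ := interior hv e he hve
    by_cases heM : e ∈ M
    · exact ⟨h, hh, hvh, by tauto⟩
    · exact ⟨g, hg, hvg, by tauto⟩

/-- The union of the edge sets of the walks in the family `F`. -/
def familyEdges (F : Finset (Σ x : α, Σ y : α, G.Walk x y)) : Finset (Sym2 α) :=
  F.biUnion fun p => p.2.2.edges.toFinset

lemma mem_familyEdges {e : Sym2 α} : e ∈ familyEdges F ↔ ∃ p ∈ F, e ∈ p.2.2.edges := by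
  simp [familyEdges]

lemma IsAltPathNest.isAltEdgeSet (hF : IsAltPathNest G s M A F) :
    IsAltEdgeSet G s M A (familyEdges F) := by
  have hpath : ∀ p ∈ F, IsAltEdgeSet G s M {p.1, p.2.1} p.2.2.edges.toFinset :=
    fun p hp => (hF.1 p hp).isAltEdgeSet
  have hends : ∀ p ∈ F, ∀ e ∈ p.2.2.edges, ∀ v ∈ e,
      (v ∈ ({p.1, p.2.1} : Finset α) ↔ v ∈ A) := fun p hp e he v hve => by
    simpa using hF.eq_endpoint_iff_mem hp (p.2.2.mem_support_of_mem_edges he hve)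
  constructor <;> simp only [mem_familyEdges]
  · rintro e ⟨p, -, he⟩
    exact p.2.2.edges_subset_edgeSet he
  · rintro v e f ⟨p, hp, he⟩ ⟨q, hq, hf⟩ hve hvf hef
    obtain rfl := hF.eq_of_mem_support hp hq (p.2.2.mem_support_of_mem_edges he hve)
      (q.2.2.mem_support_of_mem_edges hf hvf)
    exact (hpath p hp).eq_of_mem (List.mem_toFinset.2 he) (List.mem_toFinset.2 hf) hve hvf hef
  · intro v hv
    obtain ⟨p, hp, hvp⟩ := (hF.2.2.2 v hv).exists
    obtain ⟨e, he, hve⟩ := (hpath p hp).exists_mem_of_boundary v (by simpa using hvp)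
    exact ⟨e, ⟨p, hp, List.mem_toFinset.1 he⟩, hve⟩
  · rintro v hv e ⟨p, hp, he⟩ hve
    exact (hpath p hp).mem_iff_of_boundary v ((hends p hp e he v hve).2 hv) e
      (List.mem_toFinset.2 he) hve
  · rintro v hv e ⟨p, hp, he⟩ hve
    obtain ⟨f, hf, hvf⟩ := (hpath p hp).exists_mem_of_notMem_boundary v
      (mt (hends p hp e he v hve).1 hv) e (List.mem_toFinset.2 he) hve
    exact ⟨f, ⟨p, hp, List.mem_toFinset.1 hf⟩, hvf⟩

end Nests

/-- `P` is a nontrivial path with edges in `D` that starts in `A`, i.e. an initial piece of a path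
of `D` joining two vertices of `A`. -/
structure IsStem {α : Type*} {G : SimpleGraph α} (A : Finset α) (D : Finset (Sym2 α)) {x y : α}
    (P : G.Walk x y) : Prop where
  isPath : P.IsPath
  not_nil : ¬P.Nil
  mem_of_mem_edges : ∀ e ∈ P.edges, e ∈ D
  start_mem : x ∈ A

/-- `P` is a nontrivial path with edges in `D` joining two vertices of `A`. When `D` alternates
with boundary `A`, such a path is a full component of `D`. -/
structure IsLink {α : Type*} {G : SimpleGraph α} (A : Finset α) (D : Finset (Sym2 α)) {x y : α}
    (P : G.Walk x y) : Prop extends IsStem A D P where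
  end_mem : y ∈ A

section Links

variable {α : Type*} {G : SimpleGraph α} {s A : Finset α} {M D : Finset (Sym2 α)} {v x y : α}
  {P : G.Walk x y}

lemma IsLink.reverse (hP : IsLink A D P) : IsLink A D P.reverse where
  isPath := hP.isPath.reverse
  not_nil := by simpa using hP.not_nil
  mem_of_mem_edges := by simpa using hP.mem_of_mem_edges
  start_mem := hP.end_mem
  end_mem := hP.start_mem

lemma IsStem.start_ne_end (hP : IsStem A D P) : x ≠ y :=
  mt hP.isPath.nil_iff_eq.2 hP.not_nil

lemma IsStem.length_le_card (hP : IsStem A D P) : P.length ≤ D.card := by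
  classical
  calc P.length = P.edges.toFinset.card := by
        rw [List.toFinset_card_of_nodup hP.isPath.isTrail.edges_nodup, P.length_edges]
    _ ≤ D.card := Finset.card_le_card fun e he => hP.mem_of_mem_edges e (List.mem_toFinset.1 he)

namespace IsAltEdgeSet

lemma eq_of_mem_boundary (hD : IsAltEdgeSet G s M A D) (hv : v ∈ A) {e f : Sym2 α} (he : e ∈ D)
    (hf : f ∈ D) (hve : v ∈ e) (hvf : v ∈ f) : e = f :=
  hD.eq_of_mem he hf hve hvf <|
    (hD.mem_iff_of_boundary v hv e he hve).trans (hD.mem_iff_of_boundary v hv f hf hvf).symm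

lemma isChain_edges (hD : IsAltEdgeSet G s M A D) (hP : P.IsPath) (hPD : ∀ e ∈ P.edges, e ∈ D) :
    P.edges.IsChain fun e f => e ∈ M ↔ f ∉ M := by
  induction P with
  | nil => simp
  | @cons x w y hadj P ih =>
    rw [SimpleGraph.Walk.cons_isPath_iff] at hP
    rw [SimpleGraph.Walk.edges_cons, List.forall_mem_cons] at hPD
    rw [SimpleGraph.Walk.edges_cons, List.isChain_cons]
    refine ⟨fun e he => ?_, ih hP.1 hPD.2⟩
    have heP : e ∈ P.edges := List.mem_of_mem_head? he
    have hnil : ¬P.Nil := by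
      rw [← SimpleGraph.Walk.edges_eq_nil]
      exact List.ne_nil_of_mem heP
    have hwe : w ∈ e := by
      rw [head?_edges_of_not_nil hnil, Option.mem_some_iff] at he
      simp [← he]
    have hne : s(x, w) ≠ e := by
      rintro rfl
      exact hP.2 (P.fst_mem_support_of_mem_edges heP)
    have := mt (hD.eq_of_mem hPD.1 (hPD.2 e heP) (Sym2.mem_mk_right x w) hwe) hne
    tauto

lemma mem_edges_of_ne_end (hD : IsAltEdgeSet G s M A D) (hP : IsStem A D P) (hv : v ∈ P.support)
    (hy : v ≠ y) {f : Sym2 α} (hf : f ∈ D) (hvf : v ∈ f) : f ∈ P.edges := by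
  by_cases hx : v = x
  · subst hx
    have hmem := P.mk_start_snd_mem_edges hP.not_nil
    rwa [hD.eq_of_mem_boundary hP.start_mem hf (hP.mem_of_mem_edges _ hmem) hvf (by simp)]
  · obtain ⟨e, he, g, hg, ⟨hve, heM⟩, ⟨hvg, hgM⟩, -⟩ := exists_mem_and_notMem_edges_of_interior
      hP.isPath (hD.isChain_edges hP.isPath hP.mem_of_mem_edges) hv hx hy
    by_cases hfM : f ∈ M
    · rwa [hD.eq_of_mem hf (hP.mem_of_mem_edges e he) hvf hve (iff_of_true hfM heM)]
    · rwa [hD.eq_of_mem hf (hP.mem_of_mem_edges g hg) hvf hvg (iff_of_false hfM hgM)]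

lemma mem_edges_of_isLink (hD : IsAltEdgeSet G s M A D) (hP : IsLink A D P) (hv : v ∈ P.support)
    {f : Sym2 α} (hf : f ∈ D) (hvf : v ∈ f) : f ∈ P.edges := by
  by_cases hy : v = y
  · have hrev := hD.mem_edges_of_ne_end hP.reverse.toIsStem (v := v) (by simpa using hv)
      (hy ▸ hP.start_ne_end.symm) hf hvf
    simpa using hrev
  · exact hD.mem_edges_of_ne_end hP.toIsStem hv hy hf hvf

lemma eq_start_or_eq_end (hD : IsAltEdgeSet G s M A D) (hP : IsStem A D P) (hv : v ∈ P.support)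
    (hvA : v ∈ A) : v = x ∨ v = y := by
  by_contra! hinterior
  obtain ⟨e, he, f, hf, ⟨hve, heM⟩, ⟨hvf, hfM⟩, -⟩ := exists_mem_and_notMem_edges_of_interior
    hP.isPath (hD.isChain_edges hP.isPath hP.mem_of_mem_edges) hv hinterior.1 hinterior.2
  have hef : e = f :=
    hD.eq_of_mem_boundary hvA (hP.mem_of_mem_edges e he) (hP.mem_of_mem_edges f hf) hve hvf
  exact hfM (hef ▸ heM)

lemma isAltPath_of_isLink (hD : IsAltEdgeSet G s M A D) (hP : IsLink A D P) :
    IsAltPath G s M P := by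
  refine ⟨hP.isPath, mt SimpleGraph.Walk.edges_eq_nil.1 hP.not_nil,
    hD.isChain_edges hP.isPath hP.mem_of_mem_edges, ?_, ?_⟩
  · rw [head?_edges_of_not_nil hP.not_nil]
    rintro _ ⟨⟩
    exact hD.mem_iff_of_boundary x hP.start_mem _
      (hP.mem_of_mem_edges _ (P.mk_start_snd_mem_edges hP.not_nil)) (by simp)
  · rw [getLast?_edges_of_not_nil hP.not_nil]
    rintro _ ⟨⟩
    exact hD.mem_iff_of_boundary y hP.end_mem _
      (hP.mem_of_mem_edges _ (P.mk_penultimate_end_mem_edges hP.not_nil)) (by simp)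

lemma exists_isStem (hD : IsAltEdgeSet G s M A D) (hx : x ∈ A) :
    ∃ (y : α) (P : G.Walk x y), IsStem A D P := by
  obtain ⟨e, he, w, rfl⟩ := hD.exists_mem_of_boundary x hx
  have hadj : G.Adj x w := hD.mem_edgeSet _ he
  exact ⟨w, hadj.toWalk, hadj.isPath_toWalk, by simp, by simpa using he, hx⟩

lemma exists_isStem_length_succ (hD : IsAltEdgeSet G s M A D) (hP : IsStem A D P) (hy : y ∉ A) :
    ∃ (z : α) (Q : G.Walk x z), IsStem A D Q ∧ Q.length = P.length + 1 := by
  have hlast := P.mk_penultimate_end_mem_edges hP.not_nil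
  obtain ⟨f, hf, hyf, hfM⟩ := hD.exists_mem_of_notMem_boundary y hy _
    (hP.mem_of_mem_edges _ hlast) (by simp)
  have hfP : f ∉ P.edges := fun hfP => by
    rw [eq_mk_penultimate_end_of_isPath hP.isPath hfP hyf] at hfM
    tauto
  obtain ⟨z, rfl⟩ := hyf
  have hadj : G.Adj y z := hD.mem_edgeSet _ hf
  have hz : z ∉ P.support := fun hz =>
    hfP (hD.mem_edges_of_ne_end hP hz hadj.ne' hf (by simp))
  refine ⟨z, P.concat hadj, ⟨hP.isPath.concat hz hadj, ?_, ?_, hP.start_mem⟩, P.length_concat hadj⟩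
  · simp [← SimpleGraph.Walk.edges_eq_nil, SimpleGraph.Walk.edges_concat]
  · intro e he
    rw [SimpleGraph.Walk.edges_concat, List.concat_eq_append, List.mem_append,
      List.mem_singleton] at he
    rcases he with he | rfl
    exacts [hP.mem_of_mem_edges e he, hf]

lemma exists_isLink (hD : IsAltEdgeSet G s M A D) (hx : x ∈ A) :
    ∃ (y : α) (P : G.Walk x y), IsLink A D P := by
  by_contra! hnone
  have arbitrarily_long : ∀ n : ℕ, ∃ (y : α) (P : G.Walk x y), IsStem A D P ∧ n ≤ P.length := by
    intro n
    induction n with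
    | zero => simpa using hD.exists_isStem hx
    | succ n ih =>
      obtain ⟨y, P, hP, hn⟩ := ih
      obtain ⟨z, Q, hQ, hlength⟩ := hD.exists_isStem_length_succ hP fun hy => hnone y P ⟨hP, hy⟩
      exact ⟨z, Q, hQ, by lia⟩
  obtain ⟨y, P, hP, hlong⟩ := arbitrarily_long (D.card + 1)
  have := hP.length_le_card
  lia

lemma mem_edges_of_mem_support (hD : IsAltEdgeSet G s M A D) (hP : IsLink A D P) {x' y' : α}
    {Q : G.Walk x' y'} (hQD : ∀ e ∈ Q.edges, e ∈ D) (hvP : v ∈ P.support) (hvQ : v ∈ Q.support) :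
    x' ∈ P.support ∧ ∀ e ∈ Q.edges, e ∈ P.edges := by
  have hclosed : ∀ e ∈ Q.edges, ∀ u ∈ e, ∀ w ∈ e, u ∈ {u | u ∈ P.support} →
      w ∈ {u | u ∈ P.support} := fun e he u hu w hw huP =>
    P.mem_support_of_mem_edges (hD.mem_edges_of_isLink hP huP (hQD e he) hu) hw
  have hiff := forall_mem_support_iff_start_mem hclosed
  have hx' : x' ∈ P.support := (hiff v hvQ).1 hvP
  refine ⟨hx', fun e he => ?_⟩
  induction e with
  | h u w =>
    have hu : u ∈ P.support := (hiff u (Q.fst_mem_support_of_mem_edges he)).2 hx'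
    exact hD.mem_edges_of_isLink hP hu (hQD _ he) (by simp)

lemma eq_or_eq_reverse (hD : IsAltEdgeSet G s M A D) (hP : IsLink A D P) {x' y' : α}
    {Q : G.Walk x' y'} (hQ : IsLink A D Q) (hvP : v ∈ P.support) (hvQ : v ∈ Q.support) :
    (⟨x, y, P⟩ : Σ x, Σ y, G.Walk x y) = ⟨x', y', Q⟩ ∨
      (⟨x, y, P⟩ : Σ x, Σ y, G.Walk x y) = ⟨y', x', Q.reverse⟩ := by
  obtain ⟨hxQ, hPQ⟩ := hD.mem_edges_of_mem_support hQ hP.mem_of_mem_edges hvQ hvP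
  obtain ⟨-, hQP⟩ := hD.mem_edges_of_mem_support hP hQ.mem_of_mem_edges hvP hvQ
  rcases hD.eq_start_or_eq_end hQ.toIsStem hxQ hP.start_mem with rfl | rfl
  · left
    rw [sigma_mk_eq_of_mem_edges_iff hP.isPath hQ.isPath fun e => ⟨hPQ e, hQP e⟩]
  · right
    rw [sigma_mk_eq_of_mem_edges_iff hP.isPath hQ.isPath.reverse fun e => by
      simpa using ⟨hPQ e, hQP e⟩]

end IsAltEdgeSet

end Links

/-- The links of `D` with ends in `A` that run in the direction prescribed by `r`. Every link has
exactly one such direction as soon as `r` is a tournament on `A`. -/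
def orientedLinks {α : Type*} (G : SimpleGraph α) (r : α → α → Prop) (A : Finset α)
    (D : Finset (Sym2 α)) : Set (Σ x : α, Σ y : α, G.Walk x y) :=
  {p | IsLink A D p.2.2 ∧ r p.1 p.2.1}

section OrientedLinks

variable {α : Type*} {G : SimpleGraph α} {r : α → α → Prop} {s A : Finset α}
  {M D : Finset (Sym2 α)} {v : α} {p q : Σ x : α, Σ y : α, G.Walk x y}

lemma eq_of_mem_orientedLinks (hr : (A : Set α).Pairwise fun u v => r u v ↔ ¬r v u)
    (hD : IsAltEdgeSet G s M A D) (hp : p ∈ orientedLinks G r A D)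
    (hq : q ∈ orientedLinks G r A D) (hvp : v ∈ p.2.2.support) (hvq : v ∈ q.2.2.support) :
    p = q := by
  obtain ⟨hlink, hpr⟩ := hp
  rcases hD.eq_or_eq_reverse hlink hq.1 hvp hvq with hpq | hpq
  · exact hpq
  · obtain rfl : p = ⟨q.2.1, q.1, q.2.2.reverse⟩ := hpq
    exact absurd hq.2 ((hr hlink.start_mem hlink.end_mem hlink.start_ne_end).1 hpr)

lemma finite_orientedLinks (hr : (A : Set α).Pairwise fun u v => r u v ↔ ¬r v u)
    (hD : IsAltEdgeSet G s M A D) : (orientedLinks G r A D).Finite := by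
  refine Set.Finite.of_injOn (f := Sigma.fst) (fun p hp => hp.1.start_mem) ?_ A.finite_toSet
  intro p hp q hq hpq
  exact eq_of_mem_orientedLinks hr hD hp hq p.2.2.start_mem_support
    (mem_support_of_eq_endpoint (Or.inl hpq))

lemma exists_mem_orientedLinks (hr : (A : Set α).Pairwise fun u v => r u v ↔ ¬r v u)
    (hD : IsAltEdgeSet G s M A D) (hv : v ∈ A) :
    ∃ p ∈ orientedLinks G r A D, v = p.1 ∨ v = p.2.1 := by
  obtain ⟨w, P, hP⟩ := hD.exists_isLink hv
  by_cases hrvw : r v w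
  · exact ⟨⟨v, w, P⟩, ⟨hP, hrvw⟩, Or.inl rfl⟩
  · exact ⟨⟨w, v, P.reverse⟩,
      ⟨hP.reverse, (hr hP.end_mem hP.start_mem hP.start_ne_end.symm).2 hrvw⟩, Or.inr rfl⟩

lemma isAltPathNest_of_coe_eq_orientedLinks
    (hr : (A : Set α).Pairwise fun u v => r u v ↔ ¬r v u) (hD : IsAltEdgeSet G s M A D)
    {F : Finset (Σ x : α, Σ y : α, G.Walk x y)} (hF : (F : Set _) = orientedLinks G r A D) :
    IsAltPathNest G s M A F := by
  simp only [IsAltPathNest, ← Finset.mem_coe (s := F), hF]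
  refine ⟨fun p hp => hD.isAltPath_of_isLink hp.1, fun p hp q hq hpq v hvp hvq =>
    hpq (eq_of_mem_orientedLinks hr hD hp hq hvp hvq),
    fun p hp => ⟨hp.1.start_mem, hp.1.end_mem⟩, fun v hv => ?_⟩
  obtain ⟨p, hp, hvp⟩ := exists_mem_orientedLinks hr hD hv
  exact ⟨p, ⟨hp, hvp⟩, fun q hq => eq_of_mem_orientedLinks hr hD hq.1 hp
    (mem_support_of_eq_endpoint hq.2) (mem_support_of_eq_endpoint hvp)⟩

lemma IsAltPathNest.coe_eq_orientedLinks [DecidableEq α]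
    (hr : (A : Set α).Pairwise fun u v => r u v ↔ ¬r v u)
    {F : Finset (Σ x : α, Σ y : α, G.Walk x y)} (hF : IsAltPathNest G s M A F)
    (hFr : ∀ p ∈ F, r p.1 p.2.1) : (F : Set _) = orientedLinks G r A (familyEdges F) := by
  have hsub : ∀ p ∈ F, p ∈ orientedLinks G r A (familyEdges F) := fun p hp =>
    ⟨⟨⟨(hF.1 p hp).1, mt SimpleGraph.Walk.edges_eq_nil.2 (hF.1 p hp).2.1,
      fun e he => mem_familyEdges.2 ⟨p, hp, he⟩, (hF.2.2.1 p hp).1⟩, (hF.2.2.1 p hp).2⟩, hFr p hp⟩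
  refine Set.Subset.antisymm hsub fun p hp => ?_
  obtain ⟨q, hq, hpq⟩ := (hF.2.2.2 p.1 hp.1.start_mem).exists
  rwa [eq_of_mem_orientedLinks hr hF.isAltEdgeSet hp (hsub q hq) p.2.2.start_mem_support
    (mem_support_of_eq_endpoint hpq)]

lemma IsAltPathNest.isPMOn_symmDiff_familyEdges [DecidableEq α] {t : Finset α}
    {F : Finset (Σ x : α, Σ y : α, G.Walk x y)} (hM : IsPMOn G s M)
    (hF : IsAltPathNest G s M (symmDiff s t) F) : IsPMOn G t (symmDiff M (familyEdges F)) := by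
  simpa using hF.isAltEdgeSet.isPMOn_symmDiff hM

lemma IsAltPathNest.eq_of_familyEdges_eq [DecidableEq α]
    (hr : (A : Set α).Pairwise fun u v => r u v ↔ ¬r v u)
    {F F' : Finset (Σ x : α, Σ y : α, G.Walk x y)} (hF : IsAltPathNest G s M A F)
    (hFr : ∀ p ∈ F, r p.1 p.2.1) (hF' : IsAltPathNest G s M A F')
    (hFr' : ∀ p ∈ F', r p.1 p.2.1) (hedges : familyEdges F = familyEdges F') : F = F' := by
  rw [← Finset.coe_inj, hF.coe_eq_orientedLinks hr hFr, hedges,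
    ← hF'.coe_eq_orientedLinks hr hFr']

lemma IsPMOn.exists_isAltPathNest_symmDiff_familyEdges_eq [DecidableEq α] {t : Finset α}
    {N : Finset (Sym2 α)}
    (hr : ((symmDiff s t : Finset α) : Set α).Pairwise fun u v => r u v ↔ ¬r v u)
    (hM : IsPMOn G s M) (huniq : ∀ m, IsPMOn G s m → m = M) (hN : IsPMOn G t N) :
    ∃ F, IsAltPathNest G s M (symmDiff s t) F ∧ (∀ p ∈ F, r p.1 p.2.1) ∧
      symmDiff M (familyEdges F) = N := by
  have hD := hM.isAltEdgeSet_symmDiff hN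
  have hD' := hN.isAltEdgeSet_symmDiff hM
  rw [symmDiff_comm t, symmDiff_comm N] at hD'
  obtain ⟨F, hF⟩ := (finite_orientedLinks hr hD).exists_finset_coe
  have hnest := isAltPathNest_of_coe_eq_orientedLinks hr hD hF
  have hnest' := isAltPathNest_of_coe_eq_orientedLinks hr hD' hF
  rw [symmDiff_comm s] at hnest'
  have hM_eq : symmDiff N (familyEdges F) = M := huniq _ (hnest'.isPMOn_symmDiff_familyEdges hN)
  refine ⟨F, hnest, fun p hp => (hF.subset (Finset.mem_coe.2 hp)).2, ?_⟩
  rw [← hM_eq, symmDiff_symmDiff_cancel_right]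

end OrientedLinks

lemma pairwise_range_exists_lt_iff_not {α ι : Type*} [LinearOrder ι] {a : ι → α}
    (ha : Function.Injective a) :
    (Set.range a).Pairwise fun u v =>
      (∃ i j, i < j ∧ u = a i ∧ v = a j) ↔ ¬∃ i j, i < j ∧ v = a i ∧ u = a j := by
  have hlt : ∀ k l, (∃ i j, i < j ∧ a k = a i ∧ a l = a j) ↔ k < l := by
    simp [ha.eq_iff]
  rintro _ ⟨k, rfl⟩ _ ⟨l, rfl⟩ hne
  rw [hlt, hlt, not_lt]
  exact (ha.ne_iff.1 hne).le_iff_lt.symm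

theorem pmCount_eq_card_nests_general {α : Type*} [DecidableEq α] (G : SimpleGraph α)
    (sH sK : Finset α) (r : α → α → Prop)
    (hr : ((symmDiff sH sK : Finset α) : Set α).Pairwise fun u v => r u v ↔ ¬r v u)
    (MH : Finset (Sym2 α)) (hMH : IsPMOn G sH MH) (huniq : ∀ m, IsPMOn G sH m → m = MH) :
    pmCount G sK = Nat.card {F : Finset (Σ x : α, Σ y : α, G.Walk x y) //
      IsAltPathNest G sH MH (symmDiff sH sK) F ∧ ∀ p ∈ F, r p.1 p.2.1} := by
  refine (Nat.card_eq_of_bijective (fun F => ⟨symmDiff MH (familyEdges F.1),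
    F.2.1.isPMOn_symmDiff_familyEdges hMH⟩) ⟨?_, ?_⟩).symm
  · rintro ⟨F, hF, hFr⟩ ⟨F', hF', hFr'⟩ heq
    have hedges : familyEdges F = familyEdges F' :=
      symmDiff_right_injective MH (congrArg Subtype.val heq)
    exact Subtype.ext (hF.eq_of_familyEdges_eq hr hFr hF' hFr' hedges)
  · rintro ⟨N, hN⟩
    obtain ⟨F, hF, hFr, hFN⟩ :=
      hMH.exists_isAltPathNest_symmDiff_familyEdges_eq hr huniq hN
    exact ⟨⟨F, hF, hFr⟩, Subtype.ext hFN⟩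

/-- (Lemma 3.3.) If `A = {a 0, …, a (n-1)}` is partitioned into `AK` and
`AH`, and `H = G − AK` has a unique perfect matching `MH`, then the number of perfect
matchings of `K = G − AH` equals the number of families of pairwise vertex-disjoint
`MH`-alternating paths in `G` whose set of path-endpoints is exactly `A` (each vertex of
`A` being an endpoint of exactly one path of the family; each path of the family is
recorded once, oriented from its endpoint of smaller index to that of larger index). -/
theorem pmCount_eq_card_nests {α : Type*} [Fintype α] [DecidableEq α]
    (G : SimpleGraph α) (n : ℕ) (a : Fin n → α) (ha : Function.Injective a)
    (AK AH : Finset α) (hpart : AK ∪ AH = Finset.univ.image a) (hdisj : Disjoint AK AH)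
    (MH : Finset (Sym2 α))
    (hMH : IsPMOn G (Finset.univ \ AK) MH)
    (huniq : ∀ m, IsPMOn G (Finset.univ \ AK) m → m = MH) :
    pmCount G (Finset.univ \ AH) =
      Nat.card {F : Finset (Σ x : α, Σ y : α, G.Walk x y) //
        IsAltPathNest G (Finset.univ \ AK) MH (Finset.univ.image a) F ∧
        ∀ p ∈ F, ∃ i j : Fin n, i < j ∧ p.1 = a i ∧ p.2.1 = a j} := by
  have hA : symmDiff (Finset.univ \ AK) (Finset.univ \ AH) = Finset.univ.image a := by
    rw [← Finset.compl_eq_univ_sdiff, ← Finset.compl_eq_univ_sdiff, compl_symmDiff_compl,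
      hdisj.symmDiff_eq_sup, Finset.sup_eq_union, hpart]
  rw [← hA]
  refine pmCount_eq_card_nests_general G _ _
    (fun u v => ∃ i j : Fin n, i < j ∧ u = a i ∧ v = a j) ?_ MH hMH huniq
  rw [hA, Finset.coe_image, Finset.coe_univ, Set.image_univ]
  exact pairwise_range_exists_lt_iff_not ha
end
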